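/- Let m be odd and q = 2^m. Define f(x,y,z) = x³ + y³ + x²z + xy² + yz² over F_q, and F : F_q³ → F_q³ by F(x,y,z) = (f(x,y,z), f(y,z,x), f(z,x,y)). Then F is a bijection of F_q³. -/

import Mathlib

def f3 {F : Type*} [Field F] (x y z : F) : F := x ^ 3 + y ^ 3 + x ^ 2 * z + x * y ^ 2 + y * z ^ 2

/-!
Write `G = x y² + y z² + z x²`. Since `f = x³ + y³ + G`, in characteristic two the value of `F`
determines, and is determined by, `x³ + y³`, `y³ + z³` and `G`. Hence two points `(X, Y, Z)` and
`(X + x, Y + y, Z + z)` have the same image iff all three cubes change by the same amount `c`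
and `G` does not change.

As `q ≡ 2 (mod 3)`, the form `a² + a b + b²` is anisotropic over `F_q`, so cubing is injective and
it remains to exclude `c ≠ 0`, in which case `x, y, z ≠ 0`. The pair
`(x y X + y z Y + z x Z, x² y + y² z + z² x)` is a zero of the anisotropic form, hence vanishes.
This makes `(x² X + y² Y, x³ + y³)` a zero as well, so `x = y`, and then
`x² y + y² z + z² x = x (x² + x z + z²)` cannot vanish.
-/

/-- The cyclic cubic form `x y² + y z² + z x²`, which is the part of `f3` invariant under
cyclic permutation of the variables. -/
def cyclicCubic {R : Type*} [CommRing R] (x y z : R) : R := x * y ^ 2 + y * z ^ 2 + z * x ^ 2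

lemma cyclicCubic_rotate {R : Type*} [CommRing R] (x y z : R) :
    cyclicCubic y z x = cyclicCubic x y z := by
  unfold cyclicCubic
  ring

lemma f3_eq_add_cyclicCubic {K : Type*} [Field K] (x y z : K) :
    f3 x y z = x ^ 3 + y ^ 3 + cyclicCubic x y z := by
  unfold f3 cyclicCubic
  ring

section CubeRootsOfUnity

variable {K : Type*} [Field K]

lemma sq_add_self_add_one_ne_zero_of_card_mod_three [Fintype K] (hK : Fintype.card K % 3 = 2)
    (w : K) : w ^ 2 + w + 1 ≠ 0 := by
  intro hw
  obtain ⟨k, hk⟩ : ∃ k, Fintype.card K = 3 * k + 2 := ⟨Fintype.card K / 3, by omega⟩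
  have cube_eq_one : w ^ 3 = 1 := by linear_combination (w - 1) * hw
  have sq_eq_self : w ^ 2 = w := by
    simpa only [hk, pow_add, pow_mul, cube_eq_one, one_pow, one_mul] using FiniteField.pow_card w
  have w_eq_one : w = 1 := by linear_combination cube_eq_one - (w + 1) * sq_eq_self
  have three_eq_zero : (3 : K) = 0 := by
    subst w_eq_one
    linear_combination hw
  have card_eq_zero : 3 * (k : K) + 2 = 0 := by
    exact_mod_cast hk ▸ FiniteField.cast_card_eq_zero K
  exact one_ne_zero (α := K) (by linear_combination (k + 1) * three_eq_zero - card_eq_zero)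

variable (hK : ∀ w : K, w ^ 2 + w + 1 ≠ 0)
include hK

lemma eq_zero_and_eq_zero_of_sq_add_mul_add_sq {a b : K} (h : a ^ 2 + a * b + b ^ 2 = 0) :
    a = 0 ∧ b = 0 := by
  have hb : b = 0 := by
    by_contra hb
    apply hK (a / b)
    field_simp
    linear_combination h
  subst hb
  simpa using h

lemma pow_three_injective : Function.Injective fun a : K => a ^ 3 := by
  intro a b (hab : a ^ 3 = b ^ 3)
  have factored : (a - b) * (a ^ 2 + a * b + b ^ 2) = 0 := by linear_combination hab
  rcases mul_eq_zero.mp factored with h | h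
  · exact sub_eq_zero.mp h
  · obtain ⟨rfl, rfl⟩ := eq_zero_and_eq_zero_of_sq_add_mul_add_sq hK h
    rfl

lemma eq_zero_iff_of_add_pow_three_eq {X x c : K} (hX : (X + x) ^ 3 = X ^ 3 + c) :
    x = 0 ↔ c = 0 := by
  constructor
  · rintro rfl
    simpa using hX
  · rintro rfl
    simpa using pow_three_injective hK (hX.trans (add_zero _))

end CubeRootsOfUnity

section Identities

variable {R : Type*} [CommRing R] [CharP R 2] {x y z X Y Z c κ : R}

lemma sq_add_mul_add_sq_eq_zero_of_increments
    (hX : (X + x) ^ 3 = X ^ 3 + c) (hY : (Y + y) ^ 3 = Y ^ 3 + c) (hZ : (Z + z) ^ 3 = Z ^ 3 + c)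
    (hG : cyclicCubic (X + x) (Y + y) (Z + z) = cyclicCubic X Y Z) :
    (x * y * X + y * z * Y + z * x * Z) ^ 2 +
      (x * y * X + y * z * Y + z * x * Z) * (x ^ 2 * y + y ^ 2 * z + z ^ 2 * x) +
      (x ^ 2 * y + y ^ 2 * z + z ^ 2 * x) ^ 2 = 0 := by
  unfold cyclicCubic at hG
  -- The two sides differ by a multiple of `2`, which `grind` reduces to zero.
  linear_combination (norm := grind) (x * y ^ 2 + y * z ^ 2) * hX + (y * z ^ 2 + z * x ^ 2) * hY +
    (z * x ^ 2 + x * y ^ 2) * hZ + x * y * z * hG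

lemma mul_increment_mul_sq (hY : (Y + y) ^ 3 = Y ^ 3 + c) (hκ : y * (x * Y + y * X) = κ) :
    y * ((X + x) * (Y + y) ^ 2 - X * Y ^ 2) = c * x + y * κ := by
  linear_combination (norm := grind) x * hY + y * hκ

lemma mul_eq_mul_cyclicCubic
    (hX : (X + x) ^ 3 = X ^ 3 + c) (hY : (Y + y) ^ 3 = Y ^ 3 + c) (hZ : (Z + z) ^ 3 = Z ^ 3 + c)
    (hG : cyclicCubic (X + x) (Y + y) (Z + z) = cyclicCubic X Y Z)
    (hxy : y * (x * Y + y * X) = κ) (hyz : z * (y * Z + z * Y) = κ)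
    (hzx : x * (z * X + x * Z) = κ) :
    x * y * z * κ = c * cyclicCubic x y z := by
  have incr_xy := mul_increment_mul_sq hY hxy
  have incr_yz := mul_increment_mul_sq hZ hyz
  have incr_zx := mul_increment_mul_sq hX hzx
  unfold cyclicCubic at hG ⊢
  linear_combination (norm := grind) x * y * z * hG - x * z * incr_xy -
    x * y * incr_yz - y * z * incr_zx

lemma mul_sq_add_mul_add_sq_eq_zero
    (hX : (X + x) ^ 3 = X ^ 3 + c) (hY : (Y + y) ^ 3 = Y ^ 3 + c)
    (hU : x ^ 2 * y + y ^ 2 * z + z ^ 2 * x = 0) (hxy : y * (x * Y + y * X) = κ)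
    (hκ : x * y * z * κ = c * cyclicCubic x y z) :
    z * ((x ^ 2 * X + y ^ 2 * Y) ^ 2 + (x ^ 2 * X + y ^ 2 * Y) * (x ^ 3 + y ^ 3) +
      (x ^ 3 + y ^ 3) ^ 2) = 0 := by
  unfold cyclicCubic at hκ
  linear_combination (norm := grind) z * x ^ 3 * hX + z * y ^ 3 * hY + x ^ 2 * y * z * hxy +
    x * hκ + c * y * hU

-- The hypotheses say that `(x, y, z)` and `(X, Y, Z)` are orthogonal to `(1/z, 1/x, 1/y)`, so their
-- cross product is a multiple of that vector.
lemma mul_minor_eq_mul_minor [IsDomain R] (hx : x ≠ 0)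
    (hU : x ^ 2 * y + y ^ 2 * z + z ^ 2 * x = 0) (hM : x * y * X + y * z * Y + z * x * Z = 0) :
    y * (x * Y + y * X) = z * (y * Z + z * Y) := by
  apply mul_left_cancel₀ hx
  linear_combination (norm := grind) y * hM + Y * hU

end Identities

section Injectivity

variable {K : Type*} [Field K] [CharP K 2] (hK : ∀ w : K, w ^ 2 + w + 1 ≠ 0)
include hK

lemma cube_increment_eq_zero {x y z X Y Z c : K}
    (hX : (X + x) ^ 3 = X ^ 3 + c) (hY : (Y + y) ^ 3 = Y ^ 3 + c) (hZ : (Z + z) ^ 3 = Z ^ 3 + c)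
    (hG : cyclicCubic (X + x) (Y + y) (Z + z) = cyclicCubic X Y Z) : c = 0 := by
  by_contra hc
  have hx : x ≠ 0 := mt (eq_zero_iff_of_add_pow_three_eq hK hX).mp hc
  have hy : y ≠ 0 := mt (eq_zero_iff_of_add_pow_three_eq hK hY).mp hc
  have hz : z ≠ 0 := mt (eq_zero_iff_of_add_pow_three_eq hK hZ).mp hc
  obtain ⟨hM, hU⟩ := eq_zero_and_eq_zero_of_sq_add_mul_add_sq hK
    (sq_add_mul_add_sq_eq_zero_of_increments hX hY hZ hG)
  have minor_xy_eq_yz := mul_minor_eq_mul_minor hx hU hM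
  have minor_yz_eq_zx : z * (y * Z + z * Y) = x * (z * X + x * Z) :=
    mul_minor_eq_mul_minor hy (by linear_combination hU) (by linear_combination hM)
  have hκ := mul_eq_mul_cyclicCubic hX hY hZ hG minor_xy_eq_yz rfl minor_yz_eq_zx.symm
  obtain ⟨-, sum_cubes⟩ := eq_zero_and_eq_zero_of_sq_add_mul_add_sq hK <|
    (mul_eq_zero.mp (mul_sq_add_mul_add_sq_eq_zero hX hY hU minor_xy_eq_yz hκ)).resolve_left hz
  obtain rfl : x = y := pow_three_injective hK (CharTwo.add_eq_zero.mp sum_cubes)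
  have factored : x * (x ^ 2 + x * z + z ^ 2) = 0 := by linear_combination hU
  exact hx (eq_zero_and_eq_zero_of_sq_add_mul_add_sq hK
    ((mul_eq_zero.mp factored).resolve_left hx)).1

lemma eq_of_cyclicCubic_eq {x y z X Y Z : K} (hG : cyclicCubic x y z = cyclicCubic X Y Z)
    (hxy : x ^ 3 + y ^ 3 = X ^ 3 + Y ^ 3) (hyz : y ^ 3 + z ^ 3 = Y ^ 3 + Z ^ 3) :
    x = X ∧ y = Y ∧ z = Z := by
  have hX : (X + (x - X)) ^ 3 = X ^ 3 + (x ^ 3 - X ^ 3) := by ring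
  have hY : (Y + (y - Y)) ^ 3 = Y ^ 3 + (x ^ 3 - X ^ 3) := by
    linear_combination (norm := grind) hxy
  have hZ : (Z + (z - Z)) ^ 3 = Z ^ 3 + (x ^ 3 - X ^ 3) := by
    linear_combination (norm := grind) hxy + hyz
  have hc : x ^ 3 - X ^ 3 = 0 := cube_increment_eq_zero hK hX hY hZ (by simpa using hG)
  exact ⟨sub_eq_zero.mp ((eq_zero_iff_of_add_pow_three_eq hK hX).mpr hc),
    sub_eq_zero.mp ((eq_zero_iff_of_add_pow_three_eq hK hY).mpr hc),
    sub_eq_zero.mp ((eq_zero_iff_of_add_pow_three_eq hK hZ).mpr hc)⟩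

lemma f3_cyclic_injective : Function.Injective (fun p : K × K × K =>
    (f3 p.1 p.2.1 p.2.2, f3 p.2.1 p.2.2 p.1, f3 p.2.2 p.1 p.2.1)) := by
  rintro ⟨x, y, z⟩ ⟨X, Y, Z⟩ h
  simp only [Prod.mk.injEq, f3_eq_add_cyclicCubic, cyclicCubic_rotate] at h ⊢
  obtain ⟨h₁, h₂, h₃⟩ := h
  have hG : cyclicCubic x y z = cyclicCubic X Y Z := by
    linear_combination (norm := grind) h₁ + h₂ + h₃
  rw [hG] at h₁ h₂
  exact eq_of_cyclicCubic_eq hK hG (add_right_cancel h₁) (add_right_cancel h₂)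

end Injectivity

lemma two_pow_mod_three_of_odd {m : ℕ} (hm : Odd m) : 2 ^ m % 3 = 2 := by
  obtain ⟨k, rfl⟩ := hm
  simp [pow_succ, pow_mul, Nat.mul_mod, Nat.pow_mod]

theorem stmt_3 (m : ℕ) (hm : Odd m) {F : Type*} [Field F] [Fintype F]
    (hF : Fintype.card F = 2 ^ m) :
    Function.Bijective (fun p : F × F × F =>
      (f3 p.1 p.2.1 p.2.2, f3 p.2.1 p.2.2 p.1, f3 p.2.2 p.1 p.2.1)) := by
  have : CharP F 2 := charP_of_card_eq_prime_pow hF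
  have no_cube_root : ∀ w : F, w ^ 2 + w + 1 ≠ 0 :=
    sq_add_self_add_one_ne_zero_of_card_mod_three (hF ▸ two_pow_mod_three_of_odd hm)
  exact Finite.injective_iff_bijective.mp (f3_cyclic_injective no_cube_root)
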